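/- There exists a constant C > 0 with the following property. Let N be a positive integer and σ a positive integer dividing N. Let u be four times continuously differentiable on a neighbourhood of [0,1]², vanishing on the boundary of [0,1]², and satisfying −Δu + u = f on Ω = (0,1)². Let V̂ be the real span of the functions ψ_i^N(x)ψ_j^{σ}(y) for 1 ≤ i ≤ N−1, 1 ≤ j ≤ σ−1, together with ψ_i^{σ}(x)ψ_j^{N}(y) for 1 ≤ i ≤ σ−1, 1 ≤ j ≤ N−1. If û ∈ V̂ satisfies B(û, v) = (f, v) for all v ∈ V̂, then |||u − û||| ≤ C (N^{−1} |u|₂ + σ^{−3} ‖∂⁴u/∂x²∂y²‖_{0,Ω}). -/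

import Mathlib

open MeasureTheory Finset

noncomputable section

/-- The hat function `ψ_i^N` on the uniform mesh of `[0,1]` with `N` intervals. -/
def hat (N i : ℕ) (x : ℝ) : ℝ :=
  if ((i : ℝ) - 1) / N ≤ x ∧ x ≤ (i : ℝ) / N then N * (x - ((i : ℝ) - 1) / N)
  else if (i : ℝ) / N ≤ x ∧ x ≤ ((i : ℝ) + 1) / N then N * (((i : ℝ) + 1) / N - x)
  else 0

/-- The nodal piecewise bilinear interpolant `I_{Nx,Ny} u`. -/
def interp (Nx Ny : ℕ) (u : ℝ × ℝ → ℝ) : ℝ × ℝ → ℝ := fun p =>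
  ∑ i ∈ range (Nx + 1), ∑ j ∈ range (Ny + 1),
    u ((i : ℝ) / Nx, (j : ℝ) / Ny) * hat Nx i p.1 * hat Ny j p.2

/-- The one-directional interpolant `I_{Nx,0} u` (interpolation in the `x`-direction only). -/
def interpX (Nx : ℕ) (u : ℝ × ℝ → ℝ) : ℝ × ℝ → ℝ := fun p =>
  ∑ i ∈ range (Nx + 1), u ((i : ℝ) / Nx, p.2) * hat Nx i p.1

/-- The one-directional interpolant `I_{0,Ny} u` (interpolation in the `y`-direction only). -/
def interpY (Ny : ℕ) (u : ℝ × ℝ → ℝ) : ℝ × ℝ → ℝ := fun p =>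
  ∑ j ∈ range (Ny + 1), u (p.1, (j : ℝ) / Ny) * hat Ny j p.2

/-- The two-scale interpolant `Î_{N,N} u = I_{N,σ}u + I_{σ,N}u − I_{σ,σ}u`. -/
def twoScale (N σ : ℕ) (u : ℝ × ℝ → ℝ) : ℝ × ℝ → ℝ := fun p =>
  interp N σ u p + interp σ N u p - interp σ σ u p

/-- The multiscale interpolant
`I^{(k)}_{N,N} u = Σ_{i=0}^{k} I_{N/2^i, N/2^{k−i}}u − Σ_{i=1}^{k} I_{N/2^i, N/2^{k+1−i}}u`. -/
def msInterp (N k : ℕ) (u : ℝ × ℝ → ℝ) : ℝ × ℝ → ℝ := fun p =>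
  ∑ i ∈ range (k + 1), interp (N / 2 ^ i) (N / 2 ^ (k - i)) u p
    - ∑ i ∈ Finset.Icc 1 k, interp (N / 2 ^ i) (N / 2 ^ (k + 1 - i)) u p

/-- The closed square `[0,1]²`. -/
def unitSquare : Set (ℝ × ℝ) := Set.Icc (0 : ℝ) 1 ×ˢ Set.Icc (0 : ℝ) 1

/-- The open square `Ω = (0,1)²`. -/
def Omega2 : Set (ℝ × ℝ) := Set.Ioo (0 : ℝ) 1 ×ˢ Set.Ioo (0 : ℝ) 1

/-- Partial derivative in `x` (defined a.e. for Lipschitz functions; junk value `0` elsewhere). -/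
def pderivX (v : ℝ × ℝ → ℝ) : ℝ × ℝ → ℝ := fun p => deriv (fun x => v (x, p.2)) p.1

/-- Partial derivative in `y` (defined a.e. for Lipschitz functions; junk value `0` elsewhere). -/
def pderivY (v : ℝ × ℝ → ℝ) : ℝ × ℝ → ℝ := fun p => deriv (fun y => v (p.1, y)) p.2

/-- The `L²(Ω)` norm `‖v‖_{0,Ω}`. -/
def L2norm (v : ℝ × ℝ → ℝ) : ℝ := Real.sqrt (∫ p in Omega2, (v p) ^ 2)

/-- The energy norm `|||v||| = (∫_Ω |∇v|² + ∫_Ω v²)^{1/2}`, gradients taken a.e. -/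
def energyNorm (v : ℝ × ℝ → ℝ) : ℝ :=
  Real.sqrt (∫ p in Omega2, ((pderivX v p) ^ 2 + (pderivY v p) ^ 2 + (v p) ^ 2))

/-- `u` is four times continuously differentiable on a neighbourhood of `[0,1]²`. -/
def C4Near (u : ℝ × ℝ → ℝ) : Prop :=
  ∃ U : Set (ℝ × ℝ), IsOpen U ∧ unitSquare ⊆ U ∧ ContDiffOn ℝ 4 u U

/-- `u` vanishes on the boundary of `[0,1]²`. -/
def VanishOnBoundary (u : ℝ × ℝ → ℝ) : Prop :=
  ∀ p ∈ unitSquare, (p.1 = 0 ∨ p.1 = 1 ∨ p.2 = 0 ∨ p.2 = 1) → u p = 0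

/-- The seminorm `|u|₂ = ‖u_xx‖_{0,Ω} + ‖u_xy‖_{0,Ω} + ‖u_yy‖_{0,Ω}`. -/
def semi2 (u : ℝ × ℝ → ℝ) : ℝ :=
  L2norm (pderivX (pderivX u)) + L2norm (pderivX (pderivY u)) + L2norm (pderivY (pderivY u))

/-- The mixed fourth derivative `∂⁴u/∂x²∂y²`. -/
def uxxyy (u : ℝ × ℝ → ℝ) : ℝ × ℝ → ℝ := pderivX (pderivX (pderivY (pderivY u)))

/-- The bilinear form `B(v,w) = ∫_Ω ∇v·∇w + ∫_Ω v w`, gradients taken a.e. -/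
def Bform (v w : ℝ × ℝ → ℝ) : ℝ :=
  ∫ p in Omega2, (pderivX v p * pderivX w p + pderivY v p * pderivY w p + v p * w p)

/-- The two-scale sparse grid finite element space `V̂`, spanned by
`ψ_i^N(x)ψ_j^σ(y)` for `1 ≤ i ≤ N−1, 1 ≤ j ≤ σ−1` and
`ψ_i^σ(x)ψ_j^N(y)` for `1 ≤ i ≤ σ−1, 1 ≤ j ≤ N−1`. -/
def twoScaleSpace (N σ : ℕ) : Submodule ℝ (ℝ × ℝ → ℝ) :=
  Submodule.span ℝ
    ({g | ∃ i ∈ Finset.Icc 1 (N - 1), ∃ j ∈ Finset.Icc 1 (σ - 1),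
        g = fun p : ℝ × ℝ => hat N i p.1 * hat σ j p.2} ∪
     {g | ∃ i ∈ Finset.Icc 1 (σ - 1), ∃ j ∈ Finset.Icc 1 (N - 1),
        g = fun p : ℝ × ℝ => hat σ i p.1 * hat N j p.2})

/-!
Write `Î u = twoScale N σ u`, `I_{N,0} u = interpX N u` and `I_{0,N} u = interpY N u`. On a mesh
that refines the coarse one the coarse hats are combinations of the fine ones, so `Î u` lies in the
two-scale space; by Green's formula `u - û` is `B`-orthogonal to that space, whence
`|||u - û||| ≤ |||u - Î u|||` and only the interpolation error has to be bounded.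

With `z = u - I_{0,σ} u` this error splits as
`u - Î u = (u - I_{N,0} u) + I_{σ,0} (u - I_{0,N} u) + ((z - I_{σ,0} z) - (z - I_{N,0} z))`.
In the `x`-derivative the first two terms are of order `N⁻¹ |u|₂`, because `I_{σ,0}` is stable in
the `H¹` seminorm of each line. Each of the last two gains a factor `σ⁻¹` from the interpolation in
`x` and a factor `σ⁻²` from the one in `y`, at the cost of the mixed derivative `∂⁴u/∂x²∂y²`. The
`y`-derivative is symmetric, and the `L²` norm is controlled by Poincaré's inequality.
-/

/-! ### Locally Lipschitz functions -/

section LocallyLipschitz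

theorem locallyLipschitz_mul {α : Type*} [PseudoEMetricSpace α] {v w : α → ℝ}
    (hv : LocallyLipschitz v) (hw : LocallyLipschitz w) : LocallyLipschitz fun x => v x * w x :=
  (ContDiff.locallyLipschitz (𝕂 := ℝ) contDiff_mul).comp (hv.prodMk hw)

theorem locallyLipschitz_finset_sum {α ι : Type*} [PseudoEMetricSpace α] (s : Finset ι)
    {φ : ι → α → ℝ} (hφ : ∀ i ∈ s, LocallyLipschitz (φ i)) :
    LocallyLipschitz fun x => ∑ i ∈ s, φ i x := by
  classical
  induction s using Finset.induction_on with
  | empty => simpa using LocallyLipschitz.const (0 : ℝ)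
  | insert i s hi ih =>
    simp only [Finset.sum_insert hi]
    rw [Finset.forall_mem_insert] at hφ
    exact hφ.1.add (ih hφ.2)

theorem ae_differentiableAt_of_locallyLipschitz {E F : Type*} [NormedAddCommGroup E]
    [NormedSpace ℝ E] [FiniteDimensional ℝ E] [MeasurableSpace E] [BorelSpace E]
    [NormedAddCommGroup F] [NormedSpace ℝ F] [FiniteDimensional ℝ F] {μ : Measure E}
    [μ.IsAddHaarMeasure] {v : E → F} (hv : LocallyLipschitz v) :
    ∀ᵐ x ∂μ, DifferentiableAt ℝ v x := by
  have hball (n : ℕ) : ∀ᵐ x ∂μ, x ∈ Metric.closedBall (0 : E) n →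
      DifferentiableWithinAt ℝ v (Metric.closedBall 0 n) x :=
    have ⟨_, hK⟩ := hv.locallyLipschitzOn.exists_lipschitzOnWith_of_compact
      (isCompact_closedBall (0 : E) n)
    hK.ae_differentiableWithinAt_of_mem
  filter_upwards [ae_all_iff.2 hball] with x hx
  obtain ⟨n, hn⟩ := exists_nat_gt (dist x 0)
  exact (hx n hn.le).differentiableAt (Metric.closedBall_mem_nhds_of_mem hn)

end LocallyLipschitz

section Interval

variable {g : ℝ → ℝ} {a b : ℝ}

theorem absolutelyContinuousOnInterval_of_locallyLipschitz (hg : LocallyLipschitz g) (a b : ℝ) :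
    AbsolutelyContinuousOnInterval g a b :=
  have ⟨_, hK⟩ := hg.locallyLipschitzOn.exists_lipschitzOnWith_of_compact isCompact_uIcc
  hK.absolutelyContinuousOnInterval

theorem memLp_deriv_of_locallyLipschitz (hg : LocallyLipschitz g) (a b : ℝ) (p : ENNReal) :
    MemLp (deriv g) p (volume.restrict (Set.Icc a b)) := by
  obtain ⟨K, hK⟩ := hg.locallyLipschitzOn.exists_lipschitzOnWith_of_compact
    (isCompact_Icc (a := a - 1) (b := b + 1))
  refine MemLp.of_bound (measurable_deriv g).aestronglyMeasurable K ?_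
  filter_upwards [ae_restrict_mem measurableSet_Icc] with x hx
  exact norm_deriv_le_of_lipschitzOn
    (Icc_mem_nhds (by linarith [hx.1]) (by linarith [hx.2])) hK

theorem intervalIntegrable_of_memLp {f : ℝ → ℝ} (hab : a ≤ b)
    (hf : MemLp f 2 (volume.restrict (Set.Icc a b))) : IntervalIntegrable f volume a b :=
  (intervalIntegrable_iff_integrableOn_Icc_of_le hab).2 (hf.integrable one_le_two)

theorem intervalIntegrable_mul_of_memLp {f h : ℝ → ℝ} (hab : a ≤ b)
    (hf : MemLp f 2 (volume.restrict (Set.Icc a b)))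
    (hh : MemLp h 2 (volume.restrict (Set.Icc a b))) :
    IntervalIntegrable (fun x => f x * h x) volume a b :=
  (intervalIntegrable_iff_integrableOn_Icc_of_le hab).2 (hf.integrable_mul hh)

theorem intervalIntegrable_sq_of_memLp {f : ℝ → ℝ} (hab : a ≤ b)
    (hf : MemLp f 2 (volume.restrict (Set.Icc a b))) :
    IntervalIntegrable (fun x => f x ^ 2) volume a b := by
  simpa only [sq] using intervalIntegrable_mul_of_memLp hab hf hf

theorem sq_intervalIntegral_le {f : ℝ → ℝ} (hab : a ≤ b)
    (hf : MemLp f 2 (volume.restrict (Set.Icc a b))) :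
    (∫ x in a..b, f x) ^ 2 ≤ (b - a) * ∫ x in a..b, f x ^ 2 := by
  rcases hab.eq_or_lt with rfl | hlt
  · simp
  have hjensen := (even_two.convexOn_pow (𝕜 := ℝ)).map_set_average_le (by fun_prop) isClosed_univ
    (t := Set.Ioc a b) (by simp [hlt]) (by simp) (by simp) (intervalIntegrable_of_memLp hab hf).1
    (intervalIntegrable_sq_of_memLp hab hf).1
  simp only [setAverage_eq, Real.volume_real_Ioc_of_le hab, smul_eq_mul, mul_pow,
    ← intervalIntegral.integral_of_le hab] at hjensen
  have : 0 < b - a := sub_pos.2 hlt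
  calc (∫ x in a..b, f x) ^ 2
      = (b - a) ^ 2 * ((b - a)⁻¹ ^ 2 * (∫ x in a..b, f x) ^ 2) := by field_simp
    _ ≤ (b - a) ^ 2 * ((b - a)⁻¹ * ∫ x in a..b, f x ^ 2) := by gcongr
    _ = (b - a) * ∫ x in a..b, f x ^ 2 := by field_simp

theorem sq_sub_le_mul_integral_deriv_sq (hg : LocallyLipschitz g) {s t : ℝ}
    (hs : s ∈ Set.Icc a b) (ht : t ∈ Set.Icc a b) :
    (g t - g s) ^ 2 ≤ (b - a) * ∫ x in a..b, deriv g x ^ 2 := by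
  wlog hst : s ≤ t generalizing s t
  · rw [← neg_sub, neg_sq]
    exact this ht hs (le_of_not_ge hst)
  have hab : a ≤ b := hs.1.trans hs.2
  rw [← (absolutelyContinuousOnInterval_of_locallyLipschitz hg s t).integral_deriv_eq_sub]
  calc (∫ x in s..t, deriv g x) ^ 2
      ≤ (t - s) * ∫ x in s..t, deriv g x ^ 2 :=
        sq_intervalIntegral_le hst (memLp_deriv_of_locallyLipschitz hg s t 2)
    _ ≤ (b - a) * ∫ x in a..b, deriv g x ^ 2 :=
        mul_le_mul (sub_le_sub ht.2 hs.1)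
          (intervalIntegral.integral_mono_interval hs.1 hst ht.2
            (Filter.Eventually.of_forall fun _ => sq_nonneg _)
            (intervalIntegrable_sq_of_memLp hab (memLp_deriv_of_locallyLipschitz hg a b 2)))
          (intervalIntegral.integral_nonneg hst fun _ _ => sq_nonneg _) (sub_nonneg.2 hab)

theorem integral_sq_le_of_apply_eq_zero (hg : LocallyLipschitz g) {s : ℝ}
    (hs : s ∈ Set.Icc a b) (hgs : g s = 0) :
    ∫ x in a..b, g x ^ 2 ≤ (b - a) ^ 2 * ∫ x in a..b, deriv g x ^ 2 := by
  have hab : a ≤ b := hs.1.trans hs.2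
  calc ∫ x in a..b, g x ^ 2
      ≤ ∫ _ in a..b, (b - a) * ∫ x in a..b, deriv g x ^ 2 :=
        intervalIntegral.integral_mono_on hab ((hg.continuous.pow 2).intervalIntegrable a b)
          intervalIntegrable_const fun t ht => by
            simpa [hgs] using sq_sub_le_mul_integral_deriv_sq hg hs ht
    _ = (b - a) ^ 2 * ∫ x in a..b, deriv g x ^ 2 := by
        rw [intervalIntegral.integral_const, smul_eq_mul]; ring

end Interval

/-! ### Piecewise linear interpolation on a uniform mesh -/

/-- `g` coincides with an affine function on `s`. -/
def IsAffineOn (g : ℝ → ℝ) (s : Set ℝ) : Prop := ∃ c d : ℝ, ∀ x ∈ s, g x = c * x + d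

namespace IsAffineOn

variable {g h : ℝ → ℝ} {s t : Set ℝ}

theorem mono (hg : IsAffineOn g s) (hts : t ⊆ s) : IsAffineOn g t :=
  let ⟨c, d, hcd⟩ := hg
  ⟨c, d, fun x hx => hcd x (hts hx)⟩

theorem sum_const_mul {ι : Type*} {I : Finset ι} {φ : ι → ℝ → ℝ} (w : ι → ℝ)
    (hφ : ∀ i ∈ I, IsAffineOn (φ i) s) : IsAffineOn (fun x => ∑ i ∈ I, w i * φ i x) s := by
  choose! c d hcd using hφ
  refine ⟨∑ i ∈ I, w i * c i, ∑ i ∈ I, w i * d i, fun x hx => ?_⟩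
  rw [Finset.sum_mul, ← Finset.sum_add_distrib]
  refine Finset.sum_congr rfl fun i hi => ?_
  rw [hcd i hi x hx]
  ring

theorem eqOn_Icc {a b : ℝ} (hg : IsAffineOn g (Set.Icc a b)) (hh : IsAffineOn h (Set.Icc a b))
    (ha : g a = h a) (hb : g b = h b) : Set.EqOn g h (Set.Icc a b) := by
  obtain ⟨c, d, hg⟩ := hg
  obtain ⟨c', d', hh⟩ := hh
  intro x hx
  have hab : a ≤ b := hx.1.trans hx.2
  rw [hg a ⟨le_rfl, hab⟩, hh a ⟨le_rfl, hab⟩] at ha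
  rw [hg b ⟨hab, le_rfl⟩, hh b ⟨hab, le_rfl⟩] at hb
  rw [hg x hx, hh x hx]
  rcases hab.eq_or_lt with rfl | hlt
  · obtain rfl : x = a := le_antisymm hx.2 hx.1
    exact ha
  · have hc : c = c' := mul_right_cancel₀ (sub_ne_zero.2 hlt.ne') (by linarith)
    subst hc
    linarith

end IsAffineOn

/-- The `k`-th point of the uniform mesh of `[0,1]` with `N` intervals. -/
def meshPoint (N k : ℕ) : ℝ := (k : ℝ) / N

/-- The `k`-th cell of the uniform mesh of `[0,1]` with `N` intervals, counted from `k = 0`. -/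
def meshCell (N k : ℕ) : Set ℝ := Set.Icc (meshPoint N k) (meshPoint N (k + 1))

/-- The one-dimensional nodal piecewise linear interpolant, of which `interpX` and `interpY` are
the slicewise versions. -/
def linInterp (N : ℕ) (g : ℝ → ℝ) : ℝ → ℝ := fun x =>
  ∑ i ∈ range (N + 1), g (meshPoint N i) * hat N i x

section Mesh

variable {N : ℕ} {g : ℝ → ℝ} {i k : ℕ} {x : ℝ}

theorem meshPoint_zero (N : ℕ) : meshPoint N 0 = 0 := by simp [meshPoint]

theorem meshPoint_self (hN : 0 < N) : meshPoint N N = 1 :=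
  div_self (Nat.cast_ne_zero.2 hN.ne')

theorem meshPoint_mem_Icc (hk : k ≤ N) : meshPoint N k ∈ Set.Icc (0 : ℝ) 1 :=
  ⟨by unfold meshPoint; positivity, div_le_one_of_le₀ (Nat.cast_le.2 hk) (Nat.cast_nonneg N)⟩

theorem meshPoint_succ_sub (N k : ℕ) : meshPoint N (k + 1) - meshPoint N k = (N : ℝ)⁻¹ := by
  unfold meshPoint
  push_cast
  ring

theorem meshPoint_le_succ (N k : ℕ) : meshPoint N k ≤ meshPoint N (k + 1) := by
  rw [← sub_nonneg, meshPoint_succ_sub]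
  positivity

theorem meshPoint_lt_succ (hN : 0 < N) (k : ℕ) : meshPoint N k < meshPoint N (k + 1) := by
  rw [← sub_pos, meshPoint_succ_sub]
  positivity

theorem mem_meshCell_iff (hN : 0 < N) : x ∈ meshCell N k ↔ k ≤ N * x ∧ N * x ≤ k + 1 := by
  have hN' : (0 : ℝ) < N := Nat.cast_pos.2 hN
  simp only [meshCell, meshPoint, Set.mem_Icc, div_le_iff₀ hN', le_div_iff₀ hN', mul_comm x,
    Nat.cast_add_one]

theorem exists_mem_meshCell (hN : 0 < N) (hx : x ∈ Set.Icc (0 : ℝ) 1) :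
    ∃ k < N, x ∈ meshCell N k := by
  simp only [mem_meshCell_iff hN]
  rcases hx.2.eq_or_lt with rfl | hlt
  · exact ⟨N - 1, Nat.sub_one_lt hN.ne', by simp, by rw [Nat.cast_pred hN]; simp⟩
  · have hNx : 0 ≤ N * x := mul_nonneg (Nat.cast_nonneg N) hx.1
    exact ⟨⌊N * x⌋₊, (Nat.floor_lt hNx).2 (mul_lt_of_lt_one_right (Nat.cast_pos.2 hN) hlt),
      Nat.floor_le hNx, (Nat.lt_floor_add_one _).le⟩

theorem meshCell_mul_subset {m : ℕ} (hN : 0 < N) (hm : 0 < m) (k : ℕ) :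
    meshCell (N * m) k ⊆ meshCell N (k / m) := by
  intro x hx
  rw [mem_meshCell_iff (Nat.mul_pos hN hm)] at hx
  rw [mem_meshCell_iff hN]
  have hm' : (0 : ℝ) < m := Nat.cast_pos.2 hm
  have hlo : ((k / m : ℕ) : ℝ) * m ≤ k := mod_cast Nat.div_mul_le_self k m
  have hhi : (k : ℝ) + 1 ≤ ((k / m : ℕ) + 1) * m :=
    mod_cast Nat.lt_mul_of_div_lt (Nat.lt_succ_self _) hm
  push_cast at hx
  constructor <;> refine le_of_mul_le_mul_right ?_ hm' <;> linarith

theorem hat_eq_max (hN : 0 < N) (i : ℕ) (x : ℝ) : hat N i x = max 0 (1 - |N * x - i|) := by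
  have hN' : (0 : ℝ) < N := Nat.cast_pos.2 hN
  have hleft : (N : ℝ) * (x - ((i : ℝ) - 1) / N) = N * x - i + 1 := by field_simp; ring
  have hright : (N : ℝ) * (((i : ℝ) + 1) / N - x) = i + 1 - N * x := by field_simp
  simp only [hat, div_le_iff₀ hN', le_div_iff₀ hN', hleft, hright]
  split_ifs with h1 h2
  · rw [abs_of_nonpos (by linarith), max_eq_right (by linarith)]; ring
  · rw [abs_of_nonneg (by linarith), max_eq_right (by linarith)]; ring
  · refine (max_eq_left ?_).symm
    by_contra! h
    obtain ⟨hlo, hhi⟩ := abs_lt.1 (show |(N : ℝ) * x - i| < 1 by linarith)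
    rcases le_total ((N : ℝ) * x) i with hle | hle
    · exact h1 ⟨by linarith, by linarith⟩
    · exact h2 ⟨by linarith, by linarith⟩

theorem locallyLipschitz_hat (hN : 0 < N) (i : ℕ) : LocallyLipschitz (hat N i) := by
  have haff : LocallyLipschitz fun x : ℝ => N * x - i :=
    ContDiff.locallyLipschitz (𝕂 := ℝ) (by fun_prop)
  have habs : LocallyLipschitz fun x : ℝ => |N * x - i| :=
    lipschitzWith_one_norm.locallyLipschitz.comp haff
  rw [funext (hat_eq_max hN i)]
  exact ((LocallyLipschitz.const 1).sub habs).const_max 0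

theorem hat_meshPoint (hN : 0 < N) (i k : ℕ) :
    hat N i (meshPoint N k) = if i = k then 1 else 0 := by
  have hNk : (N : ℝ) * meshPoint N k = k := mul_div_cancel₀ _ (Nat.cast_ne_zero.2 hN.ne')
  rw [hat_eq_max hN, hNk]
  split_ifs with hik
  · simp [hik]
  · have : (1 : ℤ) ≤ |(k : ℤ) - i| := Int.one_le_abs (by omega)
    have : (1 : ℝ) ≤ |(k : ℝ) - i| := mod_cast this
    exact max_eq_left (by linarith)

theorem hat_eq_zero_of_notMem_Ioo (hi : i ∈ Finset.Icc 1 (N - 1)) (hx : x ∉ Set.Ioo (0 : ℝ) 1) :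
    hat N i x = 0 := by
  rw [Finset.mem_Icc] at hi
  have hN : 0 < N := by omega
  have hi1 : (1 : ℝ) ≤ i := mod_cast hi.1
  have hiN : (i : ℝ) + 1 ≤ N := mod_cast (by omega : i + 1 ≤ N)
  rw [hat_eq_max hN]
  refine max_eq_left (sub_nonpos.2 ?_)
  rw [Set.mem_Ioo, not_and_or, not_lt, not_lt] at hx
  rcases hx with hx | hx
  · have : N * x ≤ 0 := mul_nonpos_of_nonneg_of_nonpos (Nat.cast_nonneg N) hx
    exact le_abs.2 (Or.inr (by linarith))
  · have : (N : ℝ) ≤ N * x := le_mul_of_one_le_right (Nat.cast_nonneg N) hx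
    exact le_abs.2 (Or.inl (by linarith))

theorem isAffineOn_hat (hN : 0 < N) (i k : ℕ) : IsAffineOn (hat N i) (meshCell N k) := by
  simp only [IsAffineOn, mem_meshCell_iff hN, hat_eq_max hN]
  rcases lt_trichotomy i k with hik | rfl | hki
  · have : (i : ℝ) + 1 ≤ k := mod_cast hik
    refine ⟨0, 0, fun x hx => ?_⟩
    rw [abs_of_nonneg (by linarith), max_eq_left (by linarith)]
    ring
  · refine ⟨-N, i + 1, fun x hx => ?_⟩
    rw [abs_of_nonneg (by linarith), max_eq_right (by linarith)]
    ring
  · rcases (Nat.succ_le_of_lt hki).eq_or_lt with rfl | hki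
    · refine ⟨N, -k, fun x hx => ?_⟩
      push_cast
      rw [abs_of_nonpos (by linarith), max_eq_right (by linarith)]
      ring
    · have : (k : ℝ) + 2 ≤ i := mod_cast hki
      refine ⟨0, 0, fun x hx => ?_⟩
      rw [abs_of_nonpos (by linarith), max_eq_left (by linarith)]
      ring

theorem isAffineOn_linInterp (hN : 0 < N) (g : ℝ → ℝ) (k : ℕ) :
    IsAffineOn (linInterp N g) (meshCell N k) :=
  IsAffineOn.sum_const_mul _ fun i _ => isAffineOn_hat hN i k

theorem linInterp_meshPoint (hN : 0 < N) (hk : k ≤ N) :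
    linInterp N g (meshPoint N k) = g (meshPoint N k) := by
  simp [linInterp, hat_meshPoint hN, hk]

theorem linInterp_eqOn_of_isAffineOn (hN : 0 < N) (hk : k < N) (hg : IsAffineOn g (meshCell N k)) :
    Set.EqOn (linInterp N g) g (meshCell N k) :=
  (isAffineOn_linInterp hN g k).eqOn_Icc hg (linInterp_meshPoint hN hk.le)
    (linInterp_meshPoint hN hk)

theorem linInterp_eq_sum_Icc (hN : 0 < N) (h0 : g 0 = 0) (h1 : g 1 = 0) (x : ℝ) :
    linInterp N g x = ∑ k ∈ Finset.Icc 1 (N - 1), g (meshPoint N k) * hat N k x := by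
  refine (Finset.sum_subset (fun k hk => ?_) fun k hk hk' => ?_).symm
  · simp only [Finset.mem_Icc, Finset.mem_range] at hk ⊢
    omega
  · obtain rfl | rfl : k = 0 ∨ k = N := by
      simp only [Finset.mem_Icc, Finset.mem_range] at hk hk'
      omega
    · rw [meshPoint_zero, h0, zero_mul]
    · rw [meshPoint_self hN, h1, zero_mul]

theorem linInterp_hat_of_dvd {M : ℕ} (hN : 0 < N) (hMN : M ∣ N)
    (hx : x ∈ Set.Icc (0 : ℝ) 1) : linInterp N (hat M i) x = hat M i x := by
  obtain ⟨m, rfl⟩ := hMN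
  obtain ⟨k, hk, hxk⟩ := exists_mem_meshCell hN hx
  have hM : 0 < M := Nat.pos_of_mul_pos_right hN
  have hsub := meshCell_mul_subset hM (Nat.pos_of_mul_pos_left hN) k
  exact linInterp_eqOn_of_isAffineOn hN hk ((isAffineOn_hat hM i _).mono hsub) hxk

theorem hat_eq_sum_hat_of_dvd {M : ℕ} (hN : 0 < N) (hMN : M ∣ N) (hi : i ∈ Finset.Icc 1 (M - 1))
    (x : ℝ) :
    hat M i x = ∑ k ∈ Finset.Icc 1 (N - 1), hat M i (meshPoint N k) * hat N k x := by
  by_cases hx : x ∈ Set.Ioo (0 : ℝ) 1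
  · rw [← linInterp_eq_sum_Icc hN (hat_eq_zero_of_notMem_Ioo hi (by simp))
        (hat_eq_zero_of_notMem_Ioo hi (by simp)),
      linInterp_hat_of_dvd hN hMN (Set.Ioo_subset_Icc_self hx)]
  · rw [hat_eq_zero_of_notMem_Ioo hi hx, Finset.sum_eq_zero fun k hk => by
      rw [hat_eq_zero_of_notMem_Ioo hk hx, mul_zero]]

theorem locallyLipschitz_linInterp (hN : 0 < N) (g : ℝ → ℝ) : LocallyLipschitz (linInterp N g) :=
  locallyLipschitz_finset_sum _ fun i _ =>
    locallyLipschitz_mul (LocallyLipschitz.const _) (locallyLipschitz_hat hN i)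

end Mesh

/-! ### Error of piecewise linear interpolation -/

section InterpolationError

variable {N : ℕ} {g : ℝ → ℝ}

theorem intervalIntegral_eq_sum_meshCell (hN : 0 < N) {F : ℝ → ℝ}
    (hF : IntervalIntegrable F volume 0 1) :
    ∫ x in (0 : ℝ)..1, F x
      = ∑ k ∈ range N, ∫ x in meshPoint N k..meshPoint N (k + 1), F x := by
  rw [intervalIntegral.sum_integral_adjacent_intervals, meshPoint_zero, meshPoint_self hN]
  refine fun k hk => hF.mono_set ?_
  rw [Set.uIcc_of_le zero_le_one]
  exact Set.uIcc_subset_Icc (meshPoint_mem_Icc hk.le) (meshPoint_mem_Icc hk)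

theorem intervalIntegral_le_of_meshCell (hN : 0 < N) {F G : ℝ → ℝ} {c : ℝ}
    (hF : IntervalIntegrable F volume 0 1) (hG : IntervalIntegrable G volume 0 1)
    (h : ∀ k < N, ∫ x in meshPoint N k..meshPoint N (k + 1), F x
      ≤ c * ∫ x in meshPoint N k..meshPoint N (k + 1), G x) :
    ∫ x in (0 : ℝ)..1, F x ≤ c * ∫ x in (0 : ℝ)..1, G x := by
  rw [intervalIntegral_eq_sum_meshCell hN hF, intervalIntegral_eq_sum_meshCell hN hG,
    Finset.mul_sum]
  exact Finset.sum_le_sum fun k hk => h k (Finset.mem_range.1 hk)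

theorem exists_hasDerivAt_linInterp (hN : 0 < N) (g : ℝ → ℝ) (k : ℕ) :
    ∃ c, ∀ x ∈ Set.Ioo (meshPoint N k) (meshPoint N (k + 1)),
      HasDerivAt (linInterp N g) c x := by
  obtain ⟨c, d, hcd⟩ := isAffineOn_linInterp hN g k
  refine ⟨c, fun x hx => HasDerivAt.congr_of_eventuallyEq ?_
    (Filter.eventually_of_mem (Ioo_mem_nhds hx.1 hx.2) fun y hy =>
      hcd y (Set.Ioo_subset_Icc_self hy))⟩
  simpa using ((hasDerivAt_id x).const_mul c).add_const d

theorem locallyLipschitz_sub_linInterp (hN : 0 < N) (hg : LocallyLipschitz g) :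
    LocallyLipschitz (g - linInterp N g) :=
  hg.sub (locallyLipschitz_linInterp hN g)

theorem sub_linInterp_meshPoint {k : ℕ} (hN : 0 < N) (hk : k ≤ N) :
    (g - linInterp N g) (meshPoint N k) = 0 :=
  sub_eq_zero.2 (linInterp_meshPoint hN hk).symm

/-- On each cell the derivative of the interpolant is constant, and the interpolation error
vanishes at both ends. -/
theorem integral_deriv_linInterp_mul_deriv_sub (hN : 0 < N) (hg : LocallyLipschitz g) :
    ∫ x in (0 : ℝ)..1, deriv (linInterp N g) x * deriv (g - linInterp N g) x = 0 := by
  have he := locallyLipschitz_sub_linInterp hN hg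
  rw [intervalIntegral_eq_sum_meshCell hN (intervalIntegrable_mul_of_memLp zero_le_one
    (memLp_deriv_of_locallyLipschitz (locallyLipschitz_linInterp hN g) 0 1 2)
    (memLp_deriv_of_locallyLipschitz he 0 1 2))]
  refine Finset.sum_eq_zero fun k hk => ?_
  have hkN : k < N := Finset.mem_range.1 hk
  obtain ⟨c, hc⟩ := exists_hasDerivAt_linInterp hN g k
  have hcongr : ∫ x in meshPoint N k..meshPoint N (k + 1),
        deriv (linInterp N g) x * deriv (g - linInterp N g) x
      = ∫ x in meshPoint N k..meshPoint N (k + 1), c * deriv (g - linInterp N g) x := by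
    refine intervalIntegral.integral_congr_uIoo fun x hx => ?_
    rw [Set.uIoo_of_le (meshPoint_le_succ N k)] at hx
    simp only [(hc x hx).deriv]
  rw [hcongr, intervalIntegral.integral_const_mul,
    (absolutelyContinuousOnInterval_of_locallyLipschitz he _ _).integral_deriv_eq_sub,
    sub_linInterp_meshPoint hN hkN, sub_linInterp_meshPoint hN hkN.le, sub_zero, mul_zero]

theorem integral_deriv_sq_eq_linInterp_add_sub (hN : 0 < N) (hg : LocallyLipschitz g) :
    ∫ x in (0 : ℝ)..1, deriv g x ^ 2
      = (∫ x in (0 : ℝ)..1, deriv (linInterp N g) x ^ 2)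
        + ∫ x in (0 : ℝ)..1, deriv (g - linInterp N g) x ^ 2 := by
  have hI := locallyLipschitz_linInterp hN g
  have he := locallyLipschitz_sub_linInterp hN hg
  have hI2 := memLp_deriv_of_locallyLipschitz hI 0 1 2
  have he2 := memLp_deriv_of_locallyLipschitz he 0 1 2
  have hderiv : ∀ᵐ x, deriv g x = deriv (linInterp N g) x + deriv (g - linInterp N g) x := by
    filter_upwards [ae_differentiableAt_of_locallyLipschitz hg,
      ae_differentiableAt_of_locallyLipschitz hI] with x hgx hIx
    rw [deriv_sub hgx hIx]
    ring
  calc ∫ x in (0 : ℝ)..1, deriv g x ^ 2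
      = ∫ x in (0 : ℝ)..1, (deriv (linInterp N g) x ^ 2 + deriv (g - linInterp N g) x ^ 2
          + 2 * (deriv (linInterp N g) x * deriv (g - linInterp N g) x)) := by
        refine intervalIntegral.integral_congr_ae ?_
        filter_upwards [hderiv] with x hx _
        rw [hx]
        ring
    _ = _ := by
        have hIi := intervalIntegrable_sq_of_memLp zero_le_one hI2
        have hei := intervalIntegrable_sq_of_memLp zero_le_one he2
        have hIe := intervalIntegrable_mul_of_memLp zero_le_one hI2 he2
        rw [intervalIntegral.integral_add (hIi.add hei) (hIe.const_mul 2),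
          intervalIntegral.integral_add hIi hei, intervalIntegral.integral_const_mul,
          integral_deriv_linInterp_mul_deriv_sub hN hg, mul_zero, add_zero]

theorem integral_deriv_linInterp_sq_le (hN : 0 < N) (hg : LocallyLipschitz g) :
    ∫ x in (0 : ℝ)..1, deriv (linInterp N g) x ^ 2 ≤ ∫ x in (0 : ℝ)..1, deriv g x ^ 2 := by
  rw [integral_deriv_sq_eq_linInterp_add_sub hN hg]
  exact le_add_of_nonneg_right
    (intervalIntegral.integral_nonneg zero_le_one fun _ _ => sq_nonneg _)

theorem integral_deriv_sub_linInterp_sq_le (hN : 0 < N) (hg : LocallyLipschitz g) :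
    ∫ x in (0 : ℝ)..1, deriv (g - linInterp N g) x ^ 2 ≤ ∫ x in (0 : ℝ)..1, deriv g x ^ 2 := by
  rw [integral_deriv_sq_eq_linInterp_add_sub hN hg]
  exact le_add_of_nonneg_left
    (intervalIntegral.integral_nonneg zero_le_one fun _ _ => sq_nonneg _)

theorem integral_sub_linInterp_sq_le (hN : 0 < N) (hg : LocallyLipschitz g) :
    ∫ x in (0 : ℝ)..1, (g - linInterp N g) x ^ 2
      ≤ (N : ℝ)⁻¹ ^ 2 * ∫ x in (0 : ℝ)..1, deriv (g - linInterp N g) x ^ 2 := by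
  have he := locallyLipschitz_sub_linInterp hN hg
  refine intervalIntegral_le_of_meshCell hN ((he.continuous.pow 2).intervalIntegrable 0 1)
    (intervalIntegrable_sq_of_memLp zero_le_one
      (memLp_deriv_of_locallyLipschitz he 0 1 2)) fun k hk => ?_
  rw [← meshPoint_succ_sub N k]
  exact integral_sq_le_of_apply_eq_zero he (Set.left_mem_Icc.2 (meshPoint_le_succ N k))
    (sub_linInterp_meshPoint hN hk.le)

/-- By Rolle's theorem the derivative of the interpolation error has a zero in each cell. -/
theorem integral_deriv_sub_linInterp_sq_le_deriv_deriv (hN : 0 < N) (hg : Differentiable ℝ g)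
    (hg' : LocallyLipschitz (deriv g)) :
    ∫ x in (0 : ℝ)..1, deriv (g - linInterp N g) x ^ 2
      ≤ (N : ℝ)⁻¹ ^ 2 * ∫ x in (0 : ℝ)..1, deriv (deriv g) x ^ 2 := by
  have hgL : LocallyLipschitz g :=
    (contDiff_one_iff_deriv.2 ⟨hg, hg'.continuous⟩).locallyLipschitz
  have he := locallyLipschitz_sub_linInterp hN hgL
  refine intervalIntegral_le_of_meshCell hN
    (intervalIntegrable_sq_of_memLp zero_le_one (memLp_deriv_of_locallyLipschitz he 0 1 2))
    (intervalIntegrable_sq_of_memLp zero_le_one (memLp_deriv_of_locallyLipschitz hg' 0 1 2))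
    fun k hk => ?_
  obtain ⟨c, hc⟩ := exists_hasDerivAt_linInterp hN g k
  have hderiv : ∀ x ∈ Set.Ioo (meshPoint N k) (meshPoint N (k + 1)),
      deriv (g - linInterp N g) x = deriv g x - c :=
    fun x hx => ((hg x).hasDerivAt.sub (hc x hx)).deriv
  obtain ⟨s, hs, hs0⟩ := exists_deriv_eq_zero (meshPoint_lt_succ hN k)
    he.continuous.continuousOn
    ((sub_linInterp_meshPoint hN hk.le).trans (sub_linInterp_meshPoint hN hk).symm)
  calc ∫ x in meshPoint N k..meshPoint N (k + 1), deriv (g - linInterp N g) x ^ 2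
      = ∫ x in meshPoint N k..meshPoint N (k + 1), (deriv g x - c) ^ 2 := by
        refine intervalIntegral.integral_congr_uIoo fun x hx => ?_
        rw [Set.uIoo_of_le (meshPoint_le_succ N k)] at hx
        simp only [hderiv x hx]
    _ ≤ (N : ℝ)⁻¹ ^ 2 * ∫ x in meshPoint N k..meshPoint N (k + 1), deriv (deriv g) x ^ 2 := by
        rw [← meshPoint_succ_sub N k]
        simpa using integral_sq_le_of_apply_eq_zero (hg'.sub (LocallyLipschitz.const c))
          (Set.Ioo_subset_Icc_self hs) (by simpa [hderiv s hs] using hs0)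

end InterpolationError

/-! ### The unit square -/

section UnitSquare

variable {v w : ℝ × ℝ → ℝ}

theorem measurableSet_Omega2 : MeasurableSet Omega2 := measurableSet_Ioo.prod measurableSet_Ioo

theorem isCompact_unitSquare : IsCompact unitSquare := isCompact_Icc.prod isCompact_Icc

theorem Omega2_subset_unitSquare : Omega2 ⊆ unitSquare :=
  Set.prod_mono Set.Ioo_subset_Icc_self Set.Ioo_subset_Icc_self

theorem restrict_Omega2 : (volume : Measure (ℝ × ℝ)).restrict Omega2 =
    (volume.restrict (Set.Ioo (0 : ℝ) 1)).prod (volume.restrict (Set.Ioo (0 : ℝ) 1)) := by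
  rw [Measure.prod_restrict]; rfl

instance : IsFiniteMeasure ((volume : Measure (ℝ × ℝ)).restrict Omega2) := by
  rw [restrict_Omega2]; infer_instance

theorem measurePreserving_swap_Omega2 :
    MeasurePreserving Prod.swap (volume.restrict Omega2) (volume.restrict Omega2) := by
  rw [restrict_Omega2]
  exact Measure.measurePreserving_swap

theorem integral_Omega2_comp_swap (v : ℝ × ℝ → ℝ) :
    ∫ p in Omega2, v p.swap = ∫ p in Omega2, v p := by
  rw [restrict_Omega2]
  exact integral_prod_swap v

theorem integral_Omega2_eq_integral_slice (hv : IntegrableOn v Omega2) :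
    ∫ p in Omega2, v p = ∫ y in Set.Ioo (0 : ℝ) 1, ∫ x in (0 : ℝ)..1, v (x, y) := by
  rw [IntegrableOn, restrict_Omega2] at hv
  simp only [restrict_Omega2, integral_prod_symm v hv,
    intervalIntegral.integral_of_le zero_le_one, integral_Ioc_eq_integral_Ioo]

theorem integral_Omega2_mono_slice (hv : IntegrableOn v Omega2) (hw : IntegrableOn w Omega2)
    (h : ∀ y ∈ Set.Ioo (0 : ℝ) 1, ∫ x in (0 : ℝ)..1, v (x, y) ≤ ∫ x in (0 : ℝ)..1, w (x, y)) :
    ∫ p in Omega2, v p ≤ ∫ p in Omega2, w p := by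
  rw [integral_Omega2_eq_integral_slice hv, integral_Omega2_eq_integral_slice hw]
  simp only [intervalIntegral.integral_of_le zero_le_one, integral_Ioc_eq_integral_Ioo] at h ⊢
  rw [IntegrableOn, restrict_Omega2] at hv hw
  exact setIntegral_mono_on hv.integral_prod_right hw.integral_prod_right measurableSet_Ioo h

theorem memLp_Omega2_of_continuous (hv : Continuous v) : MemLp v 2 (volume.restrict Omega2) :=
  (memLp_two_iff_integrable_sq hv.aestronglyMeasurable).2
    (((hv.pow 2).continuousOn.integrableOn_compact isCompact_unitSquare).mono_set
      Omega2_subset_unitSquare)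

theorem integrableOn_Omega2_mul (hv : MemLp v 2 (volume.restrict Omega2))
    (hw : MemLp w 2 (volume.restrict Omega2)) : IntegrableOn (fun p => v p * w p) Omega2 :=
  hv.integrable_mul hw

theorem L2norm_nonneg (v : ℝ × ℝ → ℝ) : 0 ≤ L2norm v := Real.sqrt_nonneg _

theorem L2norm_sq (v : ℝ × ℝ → ℝ) : L2norm v ^ 2 = ∫ p in Omega2, v p ^ 2 :=
  Real.sq_sqrt (integral_nonneg fun _ => sq_nonneg _)

theorem L2norm_eq_lpNorm (hv : AEStronglyMeasurable v (volume.restrict Omega2)) :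
    L2norm v = lpNorm v 2 (volume.restrict Omega2) := by
  rw [lpNorm_eq_integral_norm_rpow_toReal two_ne_zero ENNReal.ofNat_ne_top hv, L2norm,
    Real.sqrt_eq_rpow]
  simp

theorem L2norm_comp_swap (v : ℝ × ℝ → ℝ) : L2norm (v ∘ Prod.swap) = L2norm v :=
  congrArg Real.sqrt (integral_Omega2_comp_swap fun p => v p ^ 2)

theorem L2norm_add_le (hv : MemLp v 2 (volume.restrict Omega2))
    (hw : MemLp w 2 (volume.restrict Omega2)) : L2norm (v + w) ≤ L2norm v + L2norm w := by
  rw [L2norm_eq_lpNorm (hv.add hw).1, L2norm_eq_lpNorm hv.1, L2norm_eq_lpNorm hw.1]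
  exact lpNorm_add_le hv one_le_two

theorem L2norm_sub_le (hv : MemLp v 2 (volume.restrict Omega2))
    (hw : MemLp w 2 (volume.restrict Omega2)) : L2norm (v - w) ≤ L2norm v + L2norm w := by
  rw [L2norm_eq_lpNorm (hv.sub hw).1, L2norm_eq_lpNorm hv.1, L2norm_eq_lpNorm hw.1]
  exact lpNorm_sub_le hv one_le_two

theorem L2norm_le_mul_of_slice {c : ℝ} (hc : 0 ≤ c) (hv : MemLp v 2 (volume.restrict Omega2))
    (hw : MemLp w 2 (volume.restrict Omega2))
    (h : ∀ y ∈ Set.Ioo (0 : ℝ) 1,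
      ∫ x in (0 : ℝ)..1, v (x, y) ^ 2 ≤ c ^ 2 * ∫ x in (0 : ℝ)..1, w (x, y) ^ 2) :
    L2norm v ≤ c * L2norm w := by
  have hsq : L2norm v ^ 2 ≤ (c * L2norm w) ^ 2 := by
    rw [mul_pow, L2norm_sq, L2norm_sq, ← integral_const_mul]
    refine integral_Omega2_mono_slice hv.integrable_sq (hw.integrable_sq.const_mul _) fun y hy => ?_
    rw [intervalIntegral.integral_const_mul]
    exact h y hy
  exact (pow_le_pow_iff_left₀ (L2norm_nonneg v) (mul_nonneg hc (L2norm_nonneg w)) two_ne_zero).1 hsq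

theorem L2norm_le_of_slice (hv : MemLp v 2 (volume.restrict Omega2))
    (hw : MemLp w 2 (volume.restrict Omega2))
    (h : ∀ y ∈ Set.Ioo (0 : ℝ) 1,
      ∫ x in (0 : ℝ)..1, v (x, y) ^ 2 ≤ ∫ x in (0 : ℝ)..1, w (x, y) ^ 2) :
    L2norm v ≤ L2norm w := by
  simpa using L2norm_le_mul_of_slice (c := 1) zero_le_one hv hw (by simpa using h)

end UnitSquare

/-! ### Partial derivatives -/

section PartialDerivatives

variable {v w : ℝ × ℝ → ℝ}

theorem locallyLipschitz_comp_swap (hv : LocallyLipschitz v) : LocallyLipschitz (v ∘ Prod.swap) :=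
  hv.comp (ContDiff.locallyLipschitz (𝕂 := ℝ) (contDiff_snd.prodMk contDiff_fst))

theorem locallyLipschitz_slice (hv : LocallyLipschitz v) (y : ℝ) :
    LocallyLipschitz fun x => v (x, y) :=
  hv.comp (LocallyLipschitz.prodMk_right y)

theorem memLp_pderivX (hv : LocallyLipschitz v) :
    MemLp (pderivX v) 2 (volume.restrict Omega2) := by
  obtain ⟨K, hK⟩ :=
    hv.locallyLipschitzOn.exists_lipschitzOnWith_of_compact isCompact_unitSquare
  have hmeas : Measurable (pderivX v) :=
    (measurable_deriv_with_param (f := fun y x => v (x, y))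
      (hv.continuous.comp continuous_swap)).comp measurable_swap
  refine MemLp.of_bound hmeas.aestronglyMeasurable K ?_
  filter_upwards [ae_restrict_mem measurableSet_Omega2] with p hp
  have hp2 := Set.Ioo_subset_Icc_self hp.2
  refine norm_deriv_le_of_lipschitzOn (Icc_mem_nhds hp.1.1 hp.1.2) (C := K) ?_
  have hslice := hK.comp (LipschitzWith.prodMk_right p.2).lipschitzOnWith
    (fun x (hx : x ∈ Set.Icc (0 : ℝ) 1) => Set.mk_mem_prod hx hp2)
  rwa [mul_one] at hslice

theorem memLp_pderivY (hv : LocallyLipschitz v) : MemLp (pderivY v) 2 (volume.restrict Omega2) :=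
  (memLp_pderivX (locallyLipschitz_comp_swap hv)).comp_measurePreserving
    measurePreserving_swap_Omega2

theorem ae_differentiableAt_slice (hv : LocallyLipschitz v) :
    ∀ᵐ p : ℝ × ℝ ∂volume.restrict Omega2, DifferentiableAt ℝ (fun x => v (x, p.2)) p.1 := by
  filter_upwards [ae_restrict_of_ae (ae_differentiableAt_of_locallyLipschitz hv)] with p hp
  exact DifferentiableAt.comp p.1 (f := fun x => (x, p.2)) hp (by fun_prop)

theorem pderivX_add_ae_eq (hv : LocallyLipschitz v) (hw : LocallyLipschitz w) :
    pderivX (v + w) =ᵐ[volume.restrict Omega2] pderivX v + pderivX w := by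
  filter_upwards [ae_differentiableAt_slice hv, ae_differentiableAt_slice hw] with p hvp hwp
  exact deriv_add hvp hwp

theorem pderivX_sub_ae_eq (hv : LocallyLipschitz v) (hw : LocallyLipschitz w) :
    pderivX (v - w) =ᵐ[volume.restrict Omega2] pderivX v - pderivX w := by
  filter_upwards [ae_differentiableAt_slice hv, ae_differentiableAt_slice hw] with p hvp hwp
  exact deriv_sub hvp hwp

theorem pderivY_sub_ae_eq (hv : LocallyLipschitz v) (hw : LocallyLipschitz w) :
    pderivY (v - w) =ᵐ[volume.restrict Omega2] pderivY v - pderivY w :=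
  measurePreserving_swap_Omega2.quasiMeasurePreserving.ae_eq_comp
    (pderivX_sub_ae_eq (locallyLipschitz_comp_swap hv) (locallyLipschitz_comp_swap hw))

theorem L2norm_congr_ae (h : v =ᵐ[volume.restrict Omega2] w) : L2norm v = L2norm w :=
  congrArg Real.sqrt (integral_congr_ae (h.fun_comp (· ^ 2)))

theorem L2norm_pderivX_add_le (hv : LocallyLipschitz v) (hw : LocallyLipschitz w) :
    L2norm (pderivX (v + w)) ≤ L2norm (pderivX v) + L2norm (pderivX w) := by
  rw [L2norm_congr_ae (pderivX_add_ae_eq hv hw)]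
  exact L2norm_add_le (memLp_pderivX hv) (memLp_pderivX hw)

theorem L2norm_pderivX_sub_le (hv : LocallyLipschitz v) (hw : LocallyLipschitz w) :
    L2norm (pderivX (v - w)) ≤ L2norm (pderivX v) + L2norm (pderivX w) := by
  rw [L2norm_congr_ae (pderivX_sub_ae_eq hv hw)]
  exact L2norm_sub_le (memLp_pderivX hv) (memLp_pderivX hw)

theorem L2norm_le_L2norm_pderivX (hv : LocallyLipschitz v)
    (h0 : ∀ y ∈ Set.Icc (0 : ℝ) 1, v (0, y) = 0) : L2norm v ≤ L2norm (pderivX v) := by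
  refine L2norm_le_of_slice (memLp_Omega2_of_continuous hv.continuous)
    (memLp_pderivX hv) fun y hy => ?_
  have hpoincare := integral_sq_le_of_apply_eq_zero (locallyLipschitz_slice hv y)
    (Set.left_mem_Icc.2 zero_le_one) (h0 y (Set.Ioo_subset_Icc_self hy))
  rwa [sub_zero, one_pow, one_mul] at hpoincare

theorem differentiable_slice {u : ℝ × ℝ → ℝ} (hu : Differentiable ℝ u) (y : ℝ) :
    Differentiable ℝ fun x => u (x, y) :=
  hu.comp (differentiable_id.prodMk (differentiable_const y))

theorem pderivX_eq_fderiv {u : ℝ × ℝ → ℝ} (hu : Differentiable ℝ u) (p : ℝ × ℝ) :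
    pderivX u p = fderiv ℝ u p (1, 0) :=
  ((hu p).hasFDerivAt.comp_hasDerivAt p.1
    ((hasDerivAt_id p.1).prodMk (hasDerivAt_const p.1 p.2))).deriv

theorem pderivY_eq_fderiv {u : ℝ × ℝ → ℝ} (hu : Differentiable ℝ u) (p : ℝ × ℝ) :
    pderivY u p = fderiv ℝ u p (0, 1) :=
  ((hu p).hasFDerivAt.comp_hasDerivAt p.2
    ((hasDerivAt_const p.2 p.1).prodMk (hasDerivAt_id p.2))).deriv

theorem contDiff_pderivX {u : ℝ × ℝ → ℝ} {n : ℕ} (hu : ContDiff ℝ (n + 1 : ℕ) u) :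
    ContDiff ℝ n (pderivX u) := by
  rw [funext (pderivX_eq_fderiv (hu.differentiable (by simp)))]
  exact (hu.fderiv_right (m := n) (by norm_cast)).clm_apply contDiff_const

theorem contDiff_pderivY {u : ℝ × ℝ → ℝ} {n : ℕ} (hu : ContDiff ℝ (n + 1 : ℕ) u) :
    ContDiff ℝ n (pderivY u) := by
  rw [funext (pderivY_eq_fderiv (hu.differentiable (by simp)))]
  exact (hu.fderiv_right (m := n) (by norm_cast)).clm_apply contDiff_const

theorem pderivX_pderivY_comm {u : ℝ × ℝ → ℝ} (hu : ContDiff ℝ 2 u) :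
    pderivX (pderivY u) = pderivY (pderivX u) := by
  have hd : Differentiable ℝ u := hu.differentiable (by simp)
  have hd' : Differentiable ℝ (fderiv ℝ u) :=
    (hu.fderiv_right (m := 1) (by norm_num)).differentiable (by simp)
  funext p
  rw [pderivX_eq_fderiv ((contDiff_pderivY (n := 1) hu).differentiable (by simp)),
    pderivY_eq_fderiv ((contDiff_pderivX (n := 1) hu).differentiable (by simp)),
    funext (pderivX_eq_fderiv hd), funext (pderivY_eq_fderiv hd),
    fderiv_clm_apply (hd' p) (differentiableAt_const _),
    fderiv_clm_apply (hd' p) (differentiableAt_const _)]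
  simpa using second_derivative_symmetric (fun q => (hd q).hasFDerivAt) (hd' p).hasFDerivAt
    ((1 : ℝ), (0 : ℝ)) ((0 : ℝ), (1 : ℝ))

theorem uxxyy_eq_pderivY_pderivX {u : ℝ × ℝ → ℝ} (hu : ContDiff ℝ 4 u) :
    uxxyy u = pderivY (pderivY (pderivX (pderivX u))) := by
  have hX : ContDiff ℝ 3 (pderivX u) := contDiff_pderivX (n := 3) hu
  have hY : ContDiff ℝ 3 (pderivY u) := contDiff_pderivY (n := 3) hu
  have hYX : ContDiff ℝ 2 (pderivY (pderivX u)) := contDiff_pderivY (n := 2) hX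
  unfold uxxyy
  rw [pderivX_pderivY_comm (hY.of_le (by norm_num)), pderivX_pderivY_comm (hu.of_le (by norm_num)),
    pderivX_pderivY_comm hYX, pderivX_pderivY_comm (hX.of_le (by norm_num))]

end PartialDerivatives

/-! ### Interpolation in one variable on the square -/

section Interpolation

variable {N M : ℕ} {v : ℝ × ℝ → ℝ}

theorem interpX_sub (N : ℕ) (v w : ℝ × ℝ → ℝ) :
    interpX N (v - w) = interpX N v - interpX N w := by
  funext p
  simp only [interpX, Pi.sub_apply, sub_mul, Finset.sum_sub_distrib]

theorem interp_eq_interpX_interpY (N M : ℕ) (v : ℝ × ℝ → ℝ) :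
    interp N M v = interpX N (interpY M v) := by
  funext p
  simp only [interp, interpX, interpY, Finset.sum_mul, mul_right_comm]

theorem interp_comp_swap (N M : ℕ) (v : ℝ × ℝ → ℝ) :
    interp N M v ∘ Prod.swap = interp M N (v ∘ Prod.swap) := by
  funext p
  simp only [interp, Function.comp_apply, Prod.fst_swap, Prod.snd_swap, Prod.swap_prod_mk]
  rw [Finset.sum_comm]
  simp only [mul_right_comm]

theorem locallyLipschitz_interpX (hN : 0 < N) (hv : LocallyLipschitz v) :
    LocallyLipschitz (interpX N v) :=
  locallyLipschitz_finset_sum _ fun _ _ => locallyLipschitz_mul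
    (hv.comp ((LocallyLipschitz.const _).prodMk LipschitzWith.prod_snd.locallyLipschitz))
    ((locallyLipschitz_hat hN _).comp LipschitzWith.prod_fst.locallyLipschitz)

theorem locallyLipschitz_sub_interpX (hN : 0 < N) (hv : LocallyLipschitz v) :
    LocallyLipschitz (v - interpX N v) :=
  hv.sub (locallyLipschitz_interpX hN hv)

theorem locallyLipschitz_interpY (hN : 0 < N) (hv : LocallyLipschitz v) :
    LocallyLipschitz (interpY N v) :=
  locallyLipschitz_comp_swap (locallyLipschitz_interpX hN (locallyLipschitz_comp_swap hv))

theorem pderivX_sub_interpY (M : ℕ) (hv : ∀ y, Differentiable ℝ fun x => v (x, y)) :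
    pderivX (v - interpY M v) = pderivX v - interpY M (pderivX v) := by
  funext p
  have hsum : HasDerivAt (fun x => interpY M v (x, p.2)) (interpY M (pderivX v) p) p.1 :=
    HasDerivAt.fun_sum fun j _ =>
      (hv (meshPoint M j) p.1).hasDerivAt.mul_const (hat M j p.2)
  exact ((hv p.2 p.1).hasDerivAt.sub hsum).deriv

theorem differentiable_sub_interpY_slice (M : ℕ) (hv : ∀ y, Differentiable ℝ fun x => v (x, y))
    (y : ℝ) : Differentiable ℝ fun x => (v - interpY M v) (x, y) :=
  (hv y).sub (Differentiable.fun_sum fun j _ =>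
    (hv (meshPoint M j)).mul_const (hat M j y) :
      Differentiable ℝ fun x => interpY M v (x, y))

theorem L2norm_pderivX_interpX_le (hN : 0 < N) (hv : LocallyLipschitz v) :
    L2norm (pderivX (interpX N v)) ≤ L2norm (pderivX v) :=
  L2norm_le_of_slice (memLp_pderivX (locallyLipschitz_interpX hN hv)) (memLp_pderivX hv)
    fun y _ => (integral_deriv_linInterp_sq_le hN (locallyLipschitz_slice hv y) :)

theorem L2norm_pderivX_sub_interpX_le_pderivX (hN : 0 < N) (hv : LocallyLipschitz v) :
    L2norm (pderivX (v - interpX N v)) ≤ L2norm (pderivX v) :=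
  L2norm_le_of_slice (memLp_pderivX (locallyLipschitz_sub_interpX hN hv)) (memLp_pderivX hv)
    fun y _ => integral_deriv_sub_linInterp_sq_le hN (locallyLipschitz_slice hv y)

theorem L2norm_pderivX_sub_interpX_le_pderivX_pderivX (hN : 0 < N)
    (hd : ∀ y, Differentiable ℝ fun x => v (x, y)) (hv : LocallyLipschitz v)
    (hv' : LocallyLipschitz (pderivX v)) :
    L2norm (pderivX (v - interpX N v)) ≤ (N : ℝ)⁻¹ * L2norm (pderivX (pderivX v)) :=
  L2norm_le_mul_of_slice (by positivity)
    (memLp_pderivX (locallyLipschitz_sub_interpX hN hv)) (memLp_pderivX hv') fun y _ =>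
      integral_deriv_sub_linInterp_sq_le_deriv_deriv hN (hd y) (locallyLipschitz_slice hv' y)

theorem L2norm_sub_interpX_le (hN : 0 < N) (hv : LocallyLipschitz v) :
    L2norm (v - interpX N v) ≤ (N : ℝ)⁻¹ * L2norm (pderivX (v - interpX N v)) :=
  L2norm_le_mul_of_slice (by positivity)
    (memLp_Omega2_of_continuous (locallyLipschitz_sub_interpX hN hv).continuous)
    (memLp_pderivX (locallyLipschitz_sub_interpX hN hv)) fun y _ =>
      integral_sub_linInterp_sq_le hN (locallyLipschitz_slice hv y)

theorem L2norm_sub_interpX_le_pderivX (hN : 0 < N) (hv : LocallyLipschitz v) :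
    L2norm (v - interpX N v) ≤ (N : ℝ)⁻¹ * L2norm (pderivX v) :=
  (L2norm_sub_interpX_le hN hv).trans
    (mul_le_mul_of_nonneg_left (L2norm_pderivX_sub_interpX_le_pderivX hN hv) (by positivity))

theorem L2norm_sub_interpX_le_pderivX_pderivX (hN : 0 < N)
    (hd : ∀ y, Differentiable ℝ fun x => v (x, y)) (hv : LocallyLipschitz v)
    (hv' : LocallyLipschitz (pderivX v)) :
    L2norm (v - interpX N v) ≤ (N : ℝ)⁻¹ ^ 2 * L2norm (pderivX (pderivX v)) := by
  rw [sq, mul_assoc]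
  exact (L2norm_sub_interpX_le hN hv).trans (mul_le_mul_of_nonneg_left
    (L2norm_pderivX_sub_interpX_le_pderivX_pderivX hN hd hv hv') (by positivity))

theorem L2norm_sub_interpY_le_pderivY (hN : 0 < N) (hv : LocallyLipschitz v) :
    L2norm (v - interpY N v) ≤ (N : ℝ)⁻¹ * L2norm (pderivY v) := by
  rw [← L2norm_comp_swap, ← L2norm_comp_swap (pderivY v)]
  exact L2norm_sub_interpX_le_pderivX hN (locallyLipschitz_comp_swap hv)

theorem L2norm_sub_interpY_le_pderivY_pderivY (hN : 0 < N) (hv : ContDiff ℝ 2 v) :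
    L2norm (v - interpY N v) ≤ (N : ℝ)⁻¹ ^ 2 * L2norm (pderivY (pderivY v)) := by
  rw [← L2norm_comp_swap, ← L2norm_comp_swap (pderivY (pderivY v))]
  have hs : ContDiff ℝ 2 (v ∘ Prod.swap) := hv.comp (contDiff_snd.prodMk contDiff_fst)
  exact L2norm_sub_interpX_le_pderivX_pderivX hN
    (differentiable_slice (hs.differentiable two_ne_zero))
    (hs.of_le one_le_two).locallyLipschitz (contDiff_pderivX (n := 1) hs).locallyLipschitz

end Interpolation

/-! ### Error of two-scale interpolation -/

section TwoScaleInterpolation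

variable {N σ : ℕ} {u : ℝ × ℝ → ℝ}

theorem twoScale_comp_swap (N σ : ℕ) (u : ℝ × ℝ → ℝ) :
    twoScale N σ u ∘ Prod.swap = twoScale N σ (u ∘ Prod.swap) := by
  funext p
  simp only [twoScale, ← interp_comp_swap, Function.comp_apply]
  ring

theorem locallyLipschitz_interp {M : ℕ} (hN : 0 < N) (hM : 0 < M) (hu : LocallyLipschitz u) :
    LocallyLipschitz (interp N M u) := by
  rw [interp_eq_interpX_interpY]
  exact locallyLipschitz_interpX hN (locallyLipschitz_interpY hM hu)

theorem locallyLipschitz_twoScale (hN : 0 < N) (hσ : 0 < σ) (hu : LocallyLipschitz u) :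
    LocallyLipschitz (twoScale N σ u) :=
  ((locallyLipschitz_interp hN hσ hu).add (locallyLipschitz_interp hσ hN hu)).sub
    (locallyLipschitz_interp hσ hσ hu)

theorem sub_twoScale_eq (N σ : ℕ) (u : ℝ × ℝ → ℝ) :
    u - twoScale N σ u = (u - interpX N u) + interpX σ (u - interpY N u)
      + ((u - interpY σ u - interpX σ (u - interpY σ u))
        - (u - interpY σ u - interpX N (u - interpY σ u))) := by
  funext p
  simp only [twoScale, interp_eq_interpX_interpY, interpX_sub, Pi.sub_apply, Pi.add_apply]
  ring

/-- A mixed term gains one power of the mesh width from the `x`-interpolation and two from the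
`y`-interpolation. -/
theorem L2norm_pderivX_sub_interpX_sub_interpY_le {M : ℕ} (hM : 0 < M) (hσ : 0 < σ)
    (hσM : σ ≤ M) (hu : ContDiff ℝ 4 u) :
    L2norm (pderivX (u - interpY σ u - interpX M (u - interpY σ u)))
      ≤ ((σ : ℝ) ^ 3)⁻¹ * L2norm (uxxyy u) := by
  have huX : ContDiff ℝ 3 (pderivX u) := contDiff_pderivX (n := 3) hu
  have huXX : ContDiff ℝ 2 (pderivX (pderivX u)) := contDiff_pderivX (n := 2) huX
  have hdu := differentiable_slice (hu.differentiable (by simp))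
  have hd := differentiable_sub_interpY_slice σ hdu
  have hX : pderivX (u - interpY σ u) = pderivX u - interpY σ (pderivX u) :=
    pderivX_sub_interpY σ hdu
  have hXX : pderivX (pderivX (u - interpY σ u))
      = pderivX (pderivX u) - interpY σ (pderivX (pderivX u)) := by
    rw [hX, pderivX_sub_interpY σ (differentiable_slice (huX.differentiable (by simp)))]
  have huL := (hu.of_le (by norm_num)).locallyLipschitz
  have huXL := (huX.of_le (by norm_num)).locallyLipschitz
  calc L2norm (pderivX (u - interpY σ u - interpX M (u - interpY σ u)))
      ≤ (M : ℝ)⁻¹ * L2norm (pderivX (pderivX u) - interpY σ (pderivX (pderivX u))) := by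
        rw [← hXX]
        refine L2norm_pderivX_sub_interpX_le_pderivX_pderivX hM hd
          (huL.sub (locallyLipschitz_interpY hσ huL)) ?_
        rw [hX]
        exact huXL.sub (locallyLipschitz_interpY hσ huXL)
    _ ≤ (σ : ℝ)⁻¹ * ((σ : ℝ)⁻¹ ^ 2 * L2norm (pderivY (pderivY (pderivX (pderivX u))))) := by
        gcongr
        · exact L2norm_nonneg _
        · exact L2norm_sub_interpY_le_pderivY_pderivY hσ huXX
    _ = ((σ : ℝ) ^ 3)⁻¹ * L2norm (uxxyy u) := by
        rw [uxxyy_eq_pderivY_pderivX hu]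
        ring

theorem L2norm_pderivX_interpX_sub_interpY_le {M : ℕ} (hM : 0 < M) (hN : 0 < N)
    (hu : ContDiff ℝ 2 u) :
    L2norm (pderivX (interpX M (u - interpY N u))) ≤ (N : ℝ)⁻¹ * L2norm (pderivX (pderivY u)) := by
  have huL := (hu.of_le one_le_two).locallyLipschitz
  have hX := pderivX_sub_interpY N (differentiable_slice (hu.differentiable two_ne_zero))
  calc L2norm (pderivX (interpX M (u - interpY N u)))
      ≤ L2norm (pderivX u - interpY N (pderivX u)) :=
        hX ▸ L2norm_pderivX_interpX_le hM (huL.sub (locallyLipschitz_interpY hN huL))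
    _ ≤ (N : ℝ)⁻¹ * L2norm (pderivX (pderivY u)) := by
        rw [pderivX_pderivY_comm hu]
        exact L2norm_sub_interpY_le_pderivY hN (contDiff_pderivX (n := 1) hu).locallyLipschitz

theorem L2norm_pderivX_sub_twoScale_le (hN : 0 < N) (hσ : 0 < σ) (hσN : σ ≤ N)
    (hu : ContDiff ℝ 4 u) :
    L2norm (pderivX (u - twoScale N σ u)) ≤ (N : ℝ)⁻¹ * L2norm (pderivX (pderivX u))
      + (N : ℝ)⁻¹ * L2norm (pderivX (pderivY u))
      + 2 * (((σ : ℝ) ^ 3)⁻¹ * L2norm (uxxyy u)) := by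
  have huX : ContDiff ℝ 3 (pderivX u) := contDiff_pderivX (n := 3) hu
  have huL := (hu.of_le (by norm_num)).locallyLipschitz
  have huXL := (huX.of_le (by norm_num)).locallyLipschitz
  have hwL := huL.sub (locallyLipschitz_interpY hN huL)
  have hzL := huL.sub (locallyLipschitz_interpY hσ huL)
  have hxL := locallyLipschitz_sub_interpX hN huL
  have hyL := locallyLipschitz_interpX hσ hwL
  have hzσL := locallyLipschitz_sub_interpX hσ hzL
  have hzNL := locallyLipschitz_sub_interpX hN hzL
  rw [sub_twoScale_eq]
  refine (L2norm_pderivX_add_le (hxL.add hyL) (hzσL.sub hzNL)).trans (add_le_add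
    ((L2norm_pderivX_add_le hxL hyL).trans (add_le_add ?_ ?_))
    ((L2norm_pderivX_sub_le hzσL hzNL).trans ?_))
  · exact L2norm_pderivX_sub_interpX_le_pderivX_pderivX hN
      (differentiable_slice (hu.differentiable (by simp))) huL huXL
  · exact L2norm_pderivX_interpX_sub_interpY_le hσ hN (hu.of_le (by norm_num))
  · rw [two_mul]
    exact add_le_add (L2norm_pderivX_sub_interpX_sub_interpY_le hσ hσ le_rfl hu)
      (L2norm_pderivX_sub_interpX_sub_interpY_le hN hσ hσN hu)

theorem L2norm_pderivY_sub_twoScale_le (hN : 0 < N) (hσ : 0 < σ) (hσN : σ ≤ N)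
    (hu : ContDiff ℝ 4 u) :
    L2norm (pderivY (u - twoScale N σ u)) ≤ (N : ℝ)⁻¹ * L2norm (pderivY (pderivY u))
      + (N : ℝ)⁻¹ * L2norm (pderivX (pderivY u))
      + 2 * (((σ : ℝ) ^ 3)⁻¹ * L2norm (uxxyy u)) := by
  have h := L2norm_pderivX_sub_twoScale_le (u := u ∘ Prod.swap) hN hσ hσN
    (hu.comp (contDiff_snd.prodMk contDiff_fst))
  rw [← twoScale_comp_swap] at h
  rw [uxxyy_eq_pderivY_pderivX hu, pderivX_pderivY_comm (hu.of_le (by norm_num)),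
    ← L2norm_comp_swap (pderivY _), ← L2norm_comp_swap (pderivY (pderivY u)),
    ← L2norm_comp_swap (pderivY (pderivX u)), ← L2norm_comp_swap (pderivY (pderivY _))]
  exact h

end TwoScaleInterpolation

/-! ### The energy norm -/

section Energy

variable {u v w z : ℝ × ℝ → ℝ}

theorem integral_add_add {α : Type*} [MeasurableSpace α] {μ : Measure α} {f g h : α → ℝ}
    (hf : Integrable f μ) (hg : Integrable g μ) (hh : Integrable h μ) :
    ∫ a, (f a + g a + h a) ∂μ = ∫ a, f a ∂μ + ∫ a, g a ∂μ + ∫ a, h a ∂μ := by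
  rw [← integral_add hf hg]
  exact integral_add (hf.add hg) hh

theorem integrable_Bform (hv : LocallyLipschitz v) (hw : LocallyLipschitz w) :
    IntegrableOn (fun p => pderivX v p * pderivX w p + pderivY v p * pderivY w p + v p * w p)
      Omega2 :=
  ((integrableOn_Omega2_mul (memLp_pderivX hv) (memLp_pderivX hw)).add
    (integrableOn_Omega2_mul (memLp_pderivY hv) (memLp_pderivY hw))).add
    (integrableOn_Omega2_mul (memLp_Omega2_of_continuous hv.continuous)
      (memLp_Omega2_of_continuous hw.continuous))

theorem Bform_eq_add (hv : LocallyLipschitz v) (hw : LocallyLipschitz w) :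
    Bform v w = (∫ p in Omega2, pderivX v p * pderivX w p)
      + (∫ p in Omega2, pderivY v p * pderivY w p) + ∫ p in Omega2, v p * w p :=
  integral_add_add (integrableOn_Omega2_mul (memLp_pderivX hv) (memLp_pderivX hw))
    (integrableOn_Omega2_mul (memLp_pderivY hv) (memLp_pderivY hw))
    (integrableOn_Omega2_mul (memLp_Omega2_of_continuous hv.continuous)
      (memLp_Omega2_of_continuous hw.continuous))

theorem Bform_comm (v w : ℝ × ℝ → ℝ) : Bform v w = Bform w v := by
  simp only [Bform, mul_comm]

theorem Bform_sub_left (hv : LocallyLipschitz v) (hw : LocallyLipschitz w)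
    (hz : LocallyLipschitz z) : Bform (v - w) z = Bform v z - Bform w z := by
  unfold Bform
  rw [← integral_sub (integrable_Bform hv hz) (integrable_Bform hw hz)]
  refine integral_congr_ae ?_
  filter_upwards [pderivX_sub_ae_eq hv hw, pderivY_sub_ae_eq hv hw] with p hX hY
  simp only [hX, hY, Pi.sub_apply]
  ring

theorem energyNorm_sq (v : ℝ × ℝ → ℝ) : energyNorm v ^ 2 = Bform v v := by
  rw [energyNorm, Real.sq_sqrt (integral_nonneg fun _ => by positivity)]
  simp only [Bform, sq]

theorem energyNorm_nonneg (v : ℝ × ℝ → ℝ) : 0 ≤ energyNorm v := Real.sqrt_nonneg _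

theorem energyNorm_sq_eq_add (hv : LocallyLipschitz v) :
    energyNorm v ^ 2 = L2norm (pderivX v) ^ 2 + L2norm (pderivY v) ^ 2 + L2norm v ^ 2 := by
  rw [energyNorm_sq, Bform_eq_add hv hv, L2norm_sq, L2norm_sq, L2norm_sq]
  simp only [sq]

theorem energyNorm_le_add (hv : LocallyLipschitz v) :
    energyNorm v ≤ L2norm (pderivX v) + L2norm (pderivY v) + L2norm v := by
  have hX := L2norm_nonneg (pderivX v)
  have hY := L2norm_nonneg (pderivY v)
  have h0 := L2norm_nonneg v
  refine (pow_le_pow_iff_left₀ (energyNorm_nonneg v) (by positivity) two_ne_zero).1 ?_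
  rw [energyNorm_sq_eq_add hv]
  nlinarith [mul_nonneg hX hY, mul_nonneg (add_nonneg hX hY) h0]

theorem energyNorm_le_two_mul_add (hv : LocallyLipschitz v)
    (h0 : ∀ y ∈ Set.Icc (0 : ℝ) 1, v (0, y) = 0) :
    energyNorm v ≤ 2 * L2norm (pderivX v) + L2norm (pderivY v) := by
  linarith [energyNorm_le_add hv, L2norm_le_L2norm_pderivX hv h0]

theorem energyNorm_le_energyNorm_sub_of_Bform_eq_zero (hv : LocallyLipschitz v)
    (hw : LocallyLipschitz w) (h : Bform v w = 0) : energyNorm v ≤ energyNorm (v - w) := by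
  have hsub : LocallyLipschitz (v - w) := hv.sub hw
  have hpythagoras : energyNorm (v - w) ^ 2 = energyNorm v ^ 2 + energyNorm w ^ 2 := by
    rw [energyNorm_sq, Bform_sub_left hv hw hsub, Bform_comm v, Bform_comm w,
      Bform_sub_left hv hw hv, Bform_sub_left hv hw hw, Bform_comm w v, h, energyNorm_sq,
      energyNorm_sq]
    ring
  refine (pow_le_pow_iff_left₀ (energyNorm_nonneg v) (energyNorm_nonneg _) two_ne_zero).1 ?_
  exact hpythagoras ▸ le_add_of_nonneg_right (sq_nonneg _)

theorem energyNorm_sub_le_of_galerkin {V : Submodule ℝ (ℝ × ℝ → ℝ)}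
    (hV : ∀ v ∈ V, LocallyLipschitz v) (hu : LocallyLipschitz u) {uh : ℝ × ℝ → ℝ} (huh : uh ∈ V)
    (hG : ∀ v ∈ V, Bform uh v = Bform u v) (hw : w ∈ V) :
    energyNorm (u - uh) ≤ energyNorm (u - w) := by
  have hmem : w - uh ∈ V := V.sub_mem hw huh
  have horth : Bform (u - uh) (w - uh) = 0 := by
    rw [Bform_sub_left hu (hV _ huh) (hV _ hmem), hG _ hmem, sub_self]
  rw [← sub_sub_sub_cancel_right u w uh]
  exact energyNorm_le_energyNorm_sub_of_Bform_eq_zero (hu.sub (hV _ huh)) (hV _ hmem) horth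

theorem integral_pderivX_mul_pderivX (hu : ContDiff ℝ 2 u) (hv : LocallyLipschitz v)
    (h0 : ∀ y ∈ Set.Icc (0 : ℝ) 1, v (0, y) = 0) (h1 : ∀ y ∈ Set.Icc (0 : ℝ) 1, v (1, y) = 0) :
    ∫ p in Omega2, pderivX u p * pderivX v p = -∫ p in Omega2, pderivX (pderivX u) p * v p := by
  have hX : ContDiff ℝ 1 (pderivX u) := contDiff_pderivX (n := 1) hu
  have hXL := hX.locallyLipschitz
  rw [integral_Omega2_eq_integral_slice
      (integrableOn_Omega2_mul (memLp_pderivX (hu.of_le one_le_two).locallyLipschitz)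
        (memLp_pderivX hv)),
    integral_Omega2_eq_integral_slice
      (integrableOn_Omega2_mul (memLp_pderivX hXL) (memLp_Omega2_of_continuous hv.continuous)),
    ← integral_neg]
  refine setIntegral_congr_fun measurableSet_Ioo fun y hy => ?_
  have hy' := Set.Ioo_subset_Icc_self hy
  have hparts := (absolutelyContinuousOnInterval_of_locallyLipschitz
      (locallyLipschitz_slice hXL y) 0 1).integral_mul_deriv_eq_deriv_mul
    (absolutelyContinuousOnInterval_of_locallyLipschitz (locallyLipschitz_slice hv y) 0 1)
  rw [h0 y hy', h1 y hy', mul_zero, mul_zero, sub_self, zero_sub] at hparts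
  exact hparts

theorem integral_pderivY_mul_pderivY (hu : ContDiff ℝ 2 u) (hv : LocallyLipschitz v)
    (h0 : ∀ x ∈ Set.Icc (0 : ℝ) 1, v (x, 0) = 0) (h1 : ∀ x ∈ Set.Icc (0 : ℝ) 1, v (x, 1) = 0) :
    ∫ p in Omega2, pderivY u p * pderivY v p = -∫ p in Omega2, pderivY (pderivY u) p * v p := by
  rw [← integral_Omega2_comp_swap, ← integral_Omega2_comp_swap fun p => pderivY (pderivY u) p * v p]
  exact integral_pderivX_mul_pderivX (hu.comp (contDiff_snd.prodMk contDiff_fst))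
    (locallyLipschitz_comp_swap hv) h0 h1

theorem Bform_eq_integral_laplacian (hu : ContDiff ℝ 2 u) (hv : LocallyLipschitz v)
    (hv0 : VanishOnBoundary v) :
    Bform u v
      = ∫ p in Omega2, (-(pderivX (pderivX u) p + pderivY (pderivY u) p) + u p) * v p := by
  have huL := (hu.of_le one_le_two).locallyLipschitz
  have hvM := memLp_Omega2_of_continuous hv.continuous
  have hXX : IntegrableOn (fun p => -(pderivX (pderivX u) p * v p)) Omega2 :=
    (integrableOn_Omega2_mul
      (memLp_pderivX (contDiff_pderivX (n := 1) hu).locallyLipschitz) hvM).neg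
  have hYY : IntegrableOn (fun p => -(pderivY (pderivY u) p * v p)) Omega2 :=
    (integrableOn_Omega2_mul
      (memLp_pderivY (contDiff_pderivY (n := 1) hu).locallyLipschitz) hvM).neg
  have h0 := integrableOn_Omega2_mul (memLp_Omega2_of_continuous huL.continuous) hvM
  rw [Bform_eq_add huL hv,
    integral_pderivX_mul_pderivX hu hv (fun y hy => hv0 _ ⟨by simp, hy⟩ (by simp))
      (fun y hy => hv0 _ ⟨by simp, hy⟩ (by simp)),
    integral_pderivY_mul_pderivY hu hv (fun x hx => hv0 _ ⟨hx, by simp⟩ (by simp))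
      (fun x hx => hv0 _ ⟨hx, by simp⟩ (by simp)),
    ← integral_neg, ← integral_neg, ← integral_add_add hXX hYY h0]
  refine integral_congr_ae (.of_forall fun p => ?_)
  ring

end Energy

/-! ### The two-scale space -/

section TwoScaleSpace

variable {N M σ : ℕ} {u v : ℝ × ℝ → ℝ}

theorem locallyLipschitz_hat_mul_hat (hN : 0 < N) (hM : 0 < M) (i j : ℕ) :
    LocallyLipschitz fun p : ℝ × ℝ => hat N i p.1 * hat M j p.2 :=
  locallyLipschitz_mul ((locallyLipschitz_hat hN i).comp LipschitzWith.prod_fst.locallyLipschitz)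
    ((locallyLipschitz_hat hM j).comp LipschitzWith.prod_snd.locallyLipschitz)

theorem vanishOnBoundary_hat_mul_hat {i j : ℕ} (hi : i ∈ Finset.Icc 1 (N - 1))
    (hj : j ∈ Finset.Icc 1 (M - 1)) :
    VanishOnBoundary fun p => hat N i p.1 * hat M j p.2 := by
  rintro ⟨x, y⟩ - (rfl | rfl | rfl | rfl) <;>
    simp [hat_eq_zero_of_notMem_Ioo hi, hat_eq_zero_of_notMem_Ioo hj]

theorem locallyLipschitz_of_mem_twoScaleSpace (hN : 0 < N) (hσ : 0 < σ)
    (hv : v ∈ twoScaleSpace N σ) : LocallyLipschitz v := by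
  unfold twoScaleSpace at hv
  induction hv using Submodule.span_induction with
  | mem x hx =>
    rcases hx with ⟨i, -, j, -, rfl⟩ | ⟨i, -, j, -, rfl⟩
    exacts [locallyLipschitz_hat_mul_hat hN hσ i j, locallyLipschitz_hat_mul_hat hσ hN i j]
  | zero => exact LocallyLipschitz.const 0
  | add x y _ _ hx hy => exact hx.add hy
  | smul c x _ hx => exact locallyLipschitz_mul (LocallyLipschitz.const c) hx

theorem vanishOnBoundary_of_mem_twoScaleSpace (hv : v ∈ twoScaleSpace N σ) :
    VanishOnBoundary v := by
  unfold twoScaleSpace at hv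
  induction hv using Submodule.span_induction with
  | mem x hx =>
    rcases hx with ⟨i, hi, j, hj, rfl⟩ | ⟨i, hi, j, hj, rfl⟩ <;>
      exact vanishOnBoundary_hat_mul_hat hi hj
  | zero => exact fun _ _ _ => rfl
  | add x y _ _ hx hy => exact fun p hp hb => by simp [hx p hp hb, hy p hp hb]
  | smul c x _ hx => exact fun p hp hb => by simp [hx p hp hb]

theorem interp_eq_sum_smul (N M : ℕ) (u : ℝ × ℝ → ℝ) :
    interp N M u = ∑ i ∈ range (N + 1), ∑ j ∈ range (M + 1),
      u (meshPoint N i, meshPoint M j) • fun p : ℝ × ℝ => hat N i p.1 * hat M j p.2 := by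
  funext p
  simp only [interp, meshPoint, Finset.sum_apply, Pi.smul_apply, smul_eq_mul, mul_assoc]

theorem interp_mem_of_vanishOnBoundary {V : Submodule ℝ (ℝ × ℝ → ℝ)} (hN : 0 < N) (hM : 0 < M)
    (hu : VanishOnBoundary u)
    (hV : ∀ i ∈ Finset.Icc 1 (N - 1), ∀ j ∈ Finset.Icc 1 (M - 1),
      (fun p : ℝ × ℝ => hat N i p.1 * hat M j p.2) ∈ V) : interp N M u ∈ V := by
  rw [interp_eq_sum_smul]
  refine Submodule.sum_mem _ fun i hi => Submodule.sum_mem _ fun j hj => ?_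
  rw [Finset.mem_range, Nat.lt_succ_iff] at hi hj
  by_cases hij : i ∈ Finset.Icc 1 (N - 1) ∧ j ∈ Finset.Icc 1 (M - 1)
  · exact Submodule.smul_mem _ _ (hV i hij.1 j hij.2)
  · have hboundary : i = 0 ∨ i = N ∨ j = 0 ∨ j = M := by
      simp only [Finset.mem_Icc] at hij
      omega
    rw [hu _ ⟨meshPoint_mem_Icc hi, meshPoint_mem_Icc hj⟩, zero_smul]
    · exact Submodule.zero_mem _
    · rcases hboundary with rfl | rfl | rfl | rfl <;>
        simp [meshPoint_zero, meshPoint_self, hN, hM]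

theorem hat_mul_hat_eq_sum_smul_of_dvd (hN : 0 < N) (hσN : σ ∣ N) {i : ℕ}
    (hi : i ∈ Finset.Icc 1 (σ - 1)) (M j : ℕ) :
    (fun p : ℝ × ℝ => hat σ i p.1 * hat M j p.2) = ∑ k ∈ Finset.Icc 1 (N - 1),
      hat σ i (meshPoint N k) • fun p : ℝ × ℝ => hat N k p.1 * hat M j p.2 := by
  funext p
  simp only [hat_eq_sum_hat_of_dvd hN hσN hi p.1, Finset.sum_apply, Pi.smul_apply, smul_eq_mul,
    mul_assoc, Finset.sum_mul]

theorem twoScale_mem_twoScaleSpace (hN : 0 < N) (hσ : 0 < σ) (hσN : σ ∣ N)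
    (hu : VanishOnBoundary u) : twoScale N σ u ∈ twoScaleSpace N σ := by
  have hNσ : ∀ i ∈ Finset.Icc 1 (N - 1), ∀ j ∈ Finset.Icc 1 (σ - 1),
      (fun p : ℝ × ℝ => hat N i p.1 * hat σ j p.2) ∈ twoScaleSpace N σ :=
    fun i hi j hj => Submodule.subset_span (Or.inl ⟨i, hi, j, hj, rfl⟩)
  have hσσ : ∀ i ∈ Finset.Icc 1 (σ - 1), ∀ j ∈ Finset.Icc 1 (σ - 1),
      (fun p : ℝ × ℝ => hat σ i p.1 * hat σ j p.2) ∈ twoScaleSpace N σ := by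
    intro i hi j hj
    rw [hat_mul_hat_eq_sum_smul_of_dvd hN hσN hi]
    exact Submodule.sum_mem _ fun k hk => Submodule.smul_mem _ _ (hNσ k hk j hj)
  refine Submodule.sub_mem _ (Submodule.add_mem _ (interp_mem_of_vanishOnBoundary hN hσ hu hNσ)
    (interp_mem_of_vanishOnBoundary hσ hN hu fun i hi j hj => ?_))
    (interp_mem_of_vanishOnBoundary hσ hσ hu hσσ)
  exact Submodule.subset_span (Or.inr ⟨i, hi, j, hj, rfl⟩)

theorem energyNorm_sub_twoScale_le (hN : 0 < N) (hσ : 0 < σ) (hσN : σ ∣ N)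
    (hu : ContDiff ℝ 4 u) (hb : VanishOnBoundary u) :
    energyNorm (u - twoScale N σ u)
      ≤ 6 * ((N : ℝ)⁻¹ * semi2 u + ((σ : ℝ) ^ 3)⁻¹ * L2norm (uxxyy u)) := by
  have huL := (hu.of_le (by norm_num)).locallyLipschitz
  have hI0 := vanishOnBoundary_of_mem_twoScaleSpace (twoScale_mem_twoScaleSpace hN hσ hσN hb)
  have hv0 (y : ℝ) (hy : y ∈ Set.Icc (0 : ℝ) 1) : (u - twoScale N σ u) (0, y) = 0 := by
    have hmem : ((0 : ℝ), y) ∈ unitSquare := ⟨by simp, hy⟩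
    rw [Pi.sub_apply, hb _ hmem (Or.inl rfl), hI0 _ hmem (Or.inl rfl), sub_zero]
  have hX := L2norm_pderivX_sub_twoScale_le hN hσ (Nat.le_of_dvd hN hσN) hu
  have hY := L2norm_pderivY_sub_twoScale_le hN hσ (Nat.le_of_dvd hN hσN) hu
  have hE := energyNorm_le_two_mul_add (v := u - twoScale N σ u)
    (huL.sub (locallyLipschitz_twoScale hN hσ huL)) hv0
  have hXX := mul_nonneg (inv_nonneg.2 N.cast_nonneg) (L2norm_nonneg (pderivX (pderivX u)))
  have hXY := mul_nonneg (inv_nonneg.2 N.cast_nonneg) (L2norm_nonneg (pderivX (pderivY u)))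
  have hYY := mul_nonneg (inv_nonneg.2 N.cast_nonneg) (L2norm_nonneg (pderivY (pderivY u)))
  rw [semi2]
  linarith

end TwoScaleSpace

/-! ### Reduction to globally smooth functions -/

section Locality

theorem C4Near.exists_contDiff {u : ℝ × ℝ → ℝ} (hu : C4Near u) :
    ∃ w : ℝ × ℝ → ℝ, ContDiff ℝ 4 w ∧ Set.EqOn u w unitSquare := by
  obtain ⟨U, hU, hsU, hcd⟩ := hu
  obtain ⟨K, hK, hsK, hKU⟩ := exists_compact_between isCompact_unitSquare hU hsU
  obtain ⟨χ, hχ1, hχ0, -⟩ := exists_contMDiffMap_one_nhds_of_subset_interior (n := 4)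
    (modelWithCornersSelf ℝ (ℝ × ℝ)) isCompact_unitSquare.isClosed hsK
  have hχ : ContDiff ℝ 4 χ := χ.contMDiff.contDiff
  refine ⟨fun p => χ p * u p, contDiff_iff_contDiffAt.2 fun p => ?_, fun p hp => ?_⟩
  · by_cases hp : p ∈ U
    · exact hχ.contDiffAt.mul (hcd.contDiffAt (hU.mem_nhds hp))
    · have hzero : (fun p => χ p * u p) =ᶠ[nhds p] fun _ => 0 := by
        filter_upwards [hK.isClosed.isOpen_compl.mem_nhds fun h => hp (hKU h)] with q hq
        rw [hχ0 q hq, zero_mul]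
      exact contDiffAt_const.congr_of_eventuallyEq hzero
  · have hone : χ p = 1 := hχ1.self_of_nhdsSet p hp
    exact (by rw [hone, one_mul] : u p = χ p * u p)

variable {v w : ℝ × ℝ → ℝ}

theorem pderivX_congr (h : Set.EqOn v w Omega2) :
    Set.EqOn (pderivX v) (pderivX w) Omega2 := fun p hp => by
  refine Filter.EventuallyEq.deriv_eq ?_
  filter_upwards [isOpen_Ioo.mem_nhds hp.1] with x hx
  exact h ⟨hx, hp.2⟩

theorem pderivY_congr (h : Set.EqOn v w Omega2) :
    Set.EqOn (pderivY v) (pderivY w) Omega2 := fun p hp => by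
  refine Filter.EventuallyEq.deriv_eq ?_
  filter_upwards [isOpen_Ioo.mem_nhds hp.2] with y hy
  exact h ⟨hp.1, hy⟩

theorem L2norm_congr (h : Set.EqOn v w Omega2) : L2norm v = L2norm w :=
  L2norm_congr_ae (ae_restrict_of_forall_mem measurableSet_Omega2 h)

theorem energyNorm_congr (h : Set.EqOn v w Omega2) : energyNorm v = energyNorm w :=
  congrArg Real.sqrt (setIntegral_congr_fun measurableSet_Omega2 fun p hp => by
    rw [h hp, pderivX_congr h hp, pderivY_congr h hp])

theorem semi2_congr (h : Set.EqOn v w Omega2) : semi2 v = semi2 w := by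
  rw [semi2, semi2, L2norm_congr (pderivX_congr (pderivX_congr h)),
    L2norm_congr (pderivX_congr (pderivY_congr h)), L2norm_congr (pderivY_congr (pderivY_congr h))]

theorem uxxyy_congr (h : Set.EqOn v w Omega2) : Set.EqOn (uxxyy v) (uxxyy w) Omega2 :=
  pderivX_congr (pderivX_congr (pderivY_congr (pderivY_congr h)))

end Locality

/-- Energy-norm error bound for the two-scale sparse grid finite element method. -/
theorem two_scale_FEM_error_bound :
    ∃ C : ℝ, 0 < C ∧ ∀ (N σ : ℕ), 0 < N → 0 < σ → σ ∣ N →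
      ∀ u f : ℝ × ℝ → ℝ, C4Near u → VanishOnBoundary u →
        (∀ p ∈ Omega2, -(pderivX (pderivX u) p + pderivY (pderivY u) p) + u p = f p) →
        ∀ uh : ℝ × ℝ → ℝ, uh ∈ twoScaleSpace N σ →
          (∀ v ∈ twoScaleSpace N σ, Bform uh v = ∫ p in Omega2, f p * v p) →
          energyNorm (fun p => u p - uh p) ≤
            C * ((N : ℝ)⁻¹ * semi2 u + ((σ : ℝ) ^ 3)⁻¹ * L2norm (uxxyy u)) := by
  refine ⟨6, by norm_num, fun N σ hN hσ hσN u f hu hb hf uh huh hG => ?_⟩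
  obtain ⟨w, hw, huw⟩ := hu.exists_contDiff
  have h : Set.EqOn u w Omega2 := huw.mono Omega2_subset_unitSquare
  have hwb : VanishOnBoundary w := fun p hp hp' => huw hp ▸ hb p hp hp'
  have hwL := (hw.of_le (by norm_num)).locallyLipschitz
  have hV (v : ℝ × ℝ → ℝ) (hv : v ∈ twoScaleSpace N σ) : LocallyLipschitz v :=
    locallyLipschitz_of_mem_twoScaleSpace hN hσ hv
  have hgalerkin : ∀ v ∈ twoScaleSpace N σ, Bform uh v = Bform w v := fun v hv => by
    rw [hG v hv, Bform_eq_integral_laplacian (hw.of_le (by norm_num)) (hV v hv)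
      (vanishOnBoundary_of_mem_twoScaleSpace hv)]
    refine setIntegral_congr_fun measurableSet_Omega2 fun p hp => ?_
    rw [← hf p hp, h hp, pderivX_congr (pderivX_congr h) hp, pderivY_congr (pderivY_congr h) hp]
  calc energyNorm (fun p => u p - uh p)
      = energyNorm (w - uh) := energyNorm_congr fun p hp => congrArg (· - uh p) (h hp)
    _ ≤ energyNorm (w - twoScale N σ w) := energyNorm_sub_le_of_galerkin hV hwL huh hgalerkin
        (twoScale_mem_twoScaleSpace hN hσ hσN hwb)
    _ ≤ 6 * ((N : ℝ)⁻¹ * semi2 w + ((σ : ℝ) ^ 3)⁻¹ * L2norm (uxxyy w)) :=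
        energyNorm_sub_twoScale_le hN hσ hσN hw hwb
    _ = 6 * ((N : ℝ)⁻¹ * semi2 u + ((σ : ℝ) ^ 3)⁻¹ * L2norm (uxxyy u)) := by
        rw [semi2_congr h, L2norm_congr (uxxyy_congr h)]
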